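/- Let n ≥ 2 be an integer and define Γ₊ : (−1,1) → ℝ by Γ₊(s) = ((1+s)/(1−s))^{1/n} · exp( ((2−n)/(n·√(n−1))) · arctan( s/√(n−1) ) ). Then: (i) Γ₊ is differentiable on (−1,1) with Γ₊'(s) = Γ₊(s) · (1+s²)/((1−s²)(s²+n−1)) > 0, so Γ₊ is strictly increasing; (ii) Γ₊ maps (−1,1) onto (0,∞), i.e. Γ₊(s) → 0 as s → −1⁺ and Γ₊(s) → ∞ as s → 1⁻; (iii) Γ₊(0) = 1 and Γ₊'(0) = 1/(n−1); (iv) Γ₊(−s) · Γ₊(s) = 1 for all s ∈ (−1,1). -/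

import Mathlib

open Filter Topology

/-- The function `Γ₊` from the paper:
`Γ₊(s) = ((1+s)/(1-s))^(1/n) · exp( ((2-n)/(n√(n-1))) · arctan(s/√(n-1)) )`. -/
noncomputable def GammaPlus (n : ℕ) (s : ℝ) : ℝ :=
  ((1 + s) / (1 - s)) ^ ((1 : ℝ) / (n : ℝ)) *
    Real.exp (((2 - (n : ℝ)) / ((n : ℝ) * Real.sqrt ((n : ℝ) - 1))) *
      Real.arctan (s / Real.sqrt ((n : ℝ) - 1)))

/-!
The logarithmic derivative of `Γ₊` is `2 / (n (1 - s²)) + (2 - n) / (n (s² + n - 1))`, and the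
stated derivative is the sum of these partial fractions. At `-1` the power vanishes while the
exponential stays bounded. Since `s ↦ (1 + s) / (1 - s)` is inverted by `s ↦ -s` and `arctan` is
odd, `Γ₊(-s) = Γ₊(s)⁻¹`, which carries the limit at `-1` over to the limit at `1`.
-/

open Real Set

section Field

variable {K : Type*} [Field K]

theorem one_add_neg_div_one_sub_neg (s : K) :
    (1 + -s) / (1 - -s) = ((1 + s) / (1 - s))⁻¹ := by
  rw [inv_div, sub_neg_eq_add, ← sub_eq_add_neg]

theorem logDeriv_partial_fractions {ν s : K} (hν : ν ≠ 0) (hs : 1 - s ^ 2 ≠ 0)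
    (hsν : s ^ 2 + ν - 1 ≠ 0) :
    2 * (1 / ν) / (1 - s ^ 2) + (2 - ν) / (ν * (s ^ 2 + ν - 1)) =
      (1 + s ^ 2) / ((1 - s ^ 2) * (s ^ 2 + ν - 1)) := by
  field_simp
  ring

variable [LinearOrder K] [IsStrictOrderedRing K] {ν s : K}

theorem one_add_div_one_sub_pos (hs : s ∈ Ioo (-1) 1) : 0 < (1 + s) / (1 - s) :=
  div_pos (by linarith [hs.1]) (by linarith [hs.2])

theorem one_sub_sq_pos (hs : s ∈ Ioo (-1) 1) : 0 < 1 - s ^ 2 :=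
  sub_pos.2 ((sq_lt_one_iff_abs_lt_one s).2 (abs_lt.2 hs))

theorem sq_add_sub_one_pos (hν : 1 < ν) (s : K) : 0 < s ^ 2 + ν - 1 := by
  linarith [sq_nonneg s]

end Field

section Calculus

variable {s : ℝ}

theorem hasDerivAt_one_add_div_one_sub (hs : s ≠ 1) :
    HasDerivAt (fun x : ℝ => (1 + x) / (1 - x)) (2 / (1 - s) ^ 2) s := by
  have h := ((hasDerivAt_id' s).const_add 1).div ((hasDerivAt_id' s).const_sub 1)
    (sub_ne_zero.2 hs.symm)
  exact h.congr_deriv (by ring)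

theorem hasDerivAt_one_add_div_one_sub_rpow (p : ℝ) (hs : s ∈ Ioo (-1 : ℝ) 1) :
    HasDerivAt (fun x : ℝ => ((1 + x) / (1 - x)) ^ p)
      (((1 + s) / (1 - s)) ^ p * (2 * p / (1 - s ^ 2))) s := by
  have hbase := one_add_div_one_sub_pos hs
  have hadd : 1 + s ≠ 0 := by linarith [hs.1]
  have hsub : 1 - s ≠ 0 := by linarith [hs.2]
  have h := (hasDerivAt_one_add_div_one_sub hs.2.ne).rpow_const (p := p) (Or.inl hbase.ne')
  refine h.congr_deriv ?_
  rw [rpow_sub_one hbase.ne', show 1 - s ^ 2 = (1 + s) * (1 - s) by ring]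
  field_simp

theorem hasDerivAt_arctan_div {r : ℝ} (hr : r ≠ 0) (s : ℝ) :
    HasDerivAt (fun x : ℝ => arctan (x / r)) (r / (s ^ 2 + r ^ 2)) s := by
  refine ((hasDerivAt_id' s).div_const r).arctan.congr_deriv ?_
  have hsum : s ^ 2 + r ^ 2 ≠ 0 := by positivity
  have hcommon : 1 + (s / r) ^ 2 = (s ^ 2 + r ^ 2) / r ^ 2 := by
    field_simp
    ring
  rw [hcommon]
  field_simp

end Calculus

/-- The function `Γ₊` with the dimension `n` replaced by a real parameter `ν`, so that
`GammaPlus n` is `realGammaPlus n` by definition. The formula is meaningful for `1 < ν`. -/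
noncomputable def realGammaPlus (ν s : ℝ) : ℝ :=
  ((1 + s) / (1 - s)) ^ (1 / ν) * exp ((2 - ν) / (ν * √(ν - 1)) * arctan (s / √(ν - 1)))

namespace realGammaPlus

variable {ν s : ℝ}

theorem pos (ν : ℝ) (hs : s ∈ Ioo (-1 : ℝ) 1) : 0 < realGammaPlus ν s :=
  mul_pos (rpow_pos_of_pos (one_add_div_one_sub_pos hs) _) (exp_pos _)

theorem apply_zero (ν : ℝ) : realGammaPlus ν 0 = 1 := by
  simp [realGammaPlus]

theorem apply_neg_one (hν : ν ≠ 0) : realGammaPlus ν (-1) = 0 := by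
  simp [realGammaPlus, hν]

theorem apply_neg (ν : ℝ) (hs : s ∈ Ioo (-1 : ℝ) 1) :
    realGammaPlus ν (-s) = (realGammaPlus ν s)⁻¹ := by
  simp only [realGammaPlus]
  rw [one_add_neg_div_one_sub_neg, inv_rpow (one_add_div_one_sub_pos hs).le, neg_div,
    arctan_neg, mul_neg, exp_neg, mul_inv]

theorem continuousAt (hν : 0 ≤ ν) (hs : s ≠ 1) : ContinuousAt (realGammaPlus ν) s := by
  have hpow : ContinuousAt (fun x : ℝ => ((1 + x) / (1 - x)) ^ (1 / ν)) s :=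
    (hasDerivAt_one_add_div_one_sub hs).continuousAt.rpow_const
      (Or.inr (one_div_nonneg.2 hν))
  have hexp : ContinuousAt
      (fun x : ℝ => exp ((2 - ν) / (ν * √(ν - 1)) * arctan (x / √(ν - 1)))) s := by
    fun_prop
  exact hpow.mul hexp

theorem tendsto_nhdsGT_neg_one (hν : 0 < ν) :
    Tendsto (realGammaPlus ν) (𝓝[>] (-1)) (𝓝 0) := by
  have h : ContinuousAt (realGammaPlus ν) (-1) := continuousAt hν.le (by norm_num)
  rw [← apply_neg_one hν.ne']
  exact h.tendsto.mono_left nhdsWithin_le_nhds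

theorem tendsto_nhdsLT_one (hν : 0 < ν) : Tendsto (realGammaPlus ν) (𝓝[<] 1) atTop := by
  have hIoo : ∀ᶠ s in 𝓝[<] (1 : ℝ), s ∈ Ioo (-1 : ℝ) 1 := Ioo_mem_nhdsLT (by norm_num)
  have hneg : Tendsto (fun s => realGammaPlus ν (-s)) (𝓝[<] 1) (𝓝 0) :=
    (tendsto_nhdsGT_neg_one hν).comp tendsto_neg_nhdsLT
  have hinv : Tendsto (fun s => (realGammaPlus ν s)⁻¹) (𝓝[<] 1) (𝓝[>] 0) :=
    tendsto_nhdsWithin_iff.2 ⟨hneg.congr' (hIoo.mono fun _ => apply_neg ν),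
      hIoo.mono fun _ hs => inv_pos.2 (pos ν hs)⟩
  simpa only [Function.comp_def, inv_inv] using tendsto_inv_nhdsGT_zero.comp hinv

theorem image_Ioo (hν : 0 < ν) : realGammaPlus ν '' Ioo (-1) 1 = Ioi 0 := by
  have hcont : ContinuousOn (realGammaPlus ν) (Ioo (-1) 1) :=
    fun s hs => (continuousAt hν.le hs.2.ne).continuousWithinAt
  refine Subset.antisymm (image_subset_iff.2 fun s hs => pos ν hs) ?_
  exact isPreconnected_Ioo.intermediate_value_Ioi
    (le_principal_iff.2 (Ioo_mem_nhdsGT (by norm_num)))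
    (le_principal_iff.2 (Ioo_mem_nhdsLT (by norm_num)))
    hcont (tendsto_nhdsGT_neg_one hν) (tendsto_nhdsLT_one hν)

theorem hasDerivAt_exponent (hν : 1 < ν) (s : ℝ) :
    HasDerivAt (fun x : ℝ => (2 - ν) / (ν * √(ν - 1)) * arctan (x / √(ν - 1)))
      ((2 - ν) / (ν * (s ^ 2 + ν - 1))) s := by
  have hsqrt : √(ν - 1) ≠ 0 := (sqrt_pos.2 (sub_pos.2 hν)).ne'
  refine ((hasDerivAt_arctan_div hsqrt s).const_mul _).congr_deriv ?_
  rw [sq_sqrt (sub_pos.2 hν).le, ← add_sub_assoc]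
  field_simp

theorem hasDerivAt (hν : 1 < ν) (hs : s ∈ Ioo (-1 : ℝ) 1) :
    HasDerivAt (realGammaPlus ν)
      (realGammaPlus ν s * (1 + s ^ 2) / ((1 - s ^ 2) * (s ^ 2 + ν - 1))) s := by
  have h := (hasDerivAt_one_add_div_one_sub_rpow (1 / ν) hs).mul (hasDerivAt_exponent hν s).exp
  refine h.congr_deriv ?_
  rw [realGammaPlus, mul_div_assoc _ (1 + s ^ 2), ← logDeriv_partial_fractions (by linarith)
    (one_sub_sq_pos hs).ne' (sq_add_sub_one_pos hν s).ne']
  ring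

theorem deriv_formula_pos (hν : 1 < ν) (hs : s ∈ Ioo (-1 : ℝ) 1) :
    0 < realGammaPlus ν s * (1 + s ^ 2) / ((1 - s ^ 2) * (s ^ 2 + ν - 1)) :=
  div_pos (mul_pos (pos ν hs) (by positivity))
    (mul_pos (one_sub_sq_pos hs) (sq_add_sub_one_pos hν s))

theorem strictMonoOn (hν : 1 < ν) : StrictMonoOn (realGammaPlus ν) (Ioo (-1) 1) :=
  strictMonoOn_of_hasDerivWithinAt_pos (convex_Ioo _ _)
    (fun _ hs => (hasDerivAt hν hs).continuousAt.continuousWithinAt)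
    (fun _ hs => (hasDerivAt hν (interior_subset hs)).hasDerivWithinAt)
    (fun _ hs => deriv_formula_pos hν (interior_subset hs))

theorem deriv_zero (hν : 1 < ν) : deriv (realGammaPlus ν) 0 = 1 / (ν - 1) := by
  rw [(hasDerivAt hν (by norm_num)).deriv, apply_zero]
  norm_num

end realGammaPlus

theorem stmt4_general {ν : ℝ} (hν : 1 < ν) :
    (∀ s ∈ Ioo (-1 : ℝ) 1,
        HasDerivAt (realGammaPlus ν)
          (realGammaPlus ν s * (1 + s ^ 2) / ((1 - s ^ 2) * (s ^ 2 + ν - 1))) s ∧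
        0 < realGammaPlus ν s * (1 + s ^ 2) / ((1 - s ^ 2) * (s ^ 2 + ν - 1))) ∧
    StrictMonoOn (realGammaPlus ν) (Ioo (-1) 1) ∧
    realGammaPlus ν '' Ioo (-1) 1 = Ioi 0 ∧
    Tendsto (realGammaPlus ν) (𝓝[>] (-1)) (𝓝 0) ∧
    Tendsto (realGammaPlus ν) (𝓝[<] 1) atTop ∧
    realGammaPlus ν 0 = 1 ∧
    deriv (realGammaPlus ν) 0 = 1 / (ν - 1) ∧
    ∀ s ∈ Ioo (-1 : ℝ) 1, realGammaPlus ν (-s) * realGammaPlus ν s = 1 := by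
  have hν₀ : 0 < ν := one_pos.trans hν
  refine ⟨fun s hs => ⟨realGammaPlus.hasDerivAt hν hs, realGammaPlus.deriv_formula_pos hν hs⟩,
    realGammaPlus.strictMonoOn hν, realGammaPlus.image_Ioo hν₀,
    realGammaPlus.tendsto_nhdsGT_neg_one hν₀, realGammaPlus.tendsto_nhdsLT_one hν₀,
    realGammaPlus.apply_zero ν, realGammaPlus.deriv_zero hν, fun s hs => ?_⟩
  rw [realGammaPlus.apply_neg ν hs, inv_mul_cancel₀ (realGammaPlus.pos ν hs).ne']

/-- Basic properties of `Γ₊`: its derivative formula and positivity (hence strict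
monotonicity), that it maps `(-1,1)` onto `(0,∞)` (with the corresponding
one-sided limits), the values `Γ₊(0) = 1`, `Γ₊'(0) = 1/(n-1)`, and the
identity `Γ₊(-s)·Γ₊(s) = 1`. -/
theorem stmt4 (n : ℕ) (hn : 2 ≤ n) :
    (∀ s ∈ Set.Ioo (-1 : ℝ) 1,
        HasDerivAt (GammaPlus n)
          (GammaPlus n s * (1 + s ^ 2) / ((1 - s ^ 2) * (s ^ 2 + (n : ℝ) - 1))) s ∧
        0 < GammaPlus n s * (1 + s ^ 2) / ((1 - s ^ 2) * (s ^ 2 + (n : ℝ) - 1))) ∧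
    StrictMonoOn (GammaPlus n) (Set.Ioo (-1 : ℝ) 1) ∧
    GammaPlus n '' Set.Ioo (-1 : ℝ) 1 = Set.Ioi 0 ∧
    Tendsto (GammaPlus n) (nhdsWithin (-1) (Set.Ioi (-1 : ℝ))) (nhds 0) ∧
    Tendsto (GammaPlus n) (nhdsWithin 1 (Set.Iio (1 : ℝ))) atTop ∧
    GammaPlus n 0 = 1 ∧
    deriv (GammaPlus n) 0 = 1 / ((n : ℝ) - 1) ∧
    ∀ s ∈ Set.Ioo (-1 : ℝ) 1, GammaPlus n (-s) * GammaPlus n s = 1 :=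
  stmt4_general (ν := n) (Nat.one_lt_cast.2 hn)
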